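/- Let X be a compact Hausdorff space and v : X → M_n(ℂ) a continuous map such that each v(x) is a unitary with v(x)^k = 1. Then the following are equivalent: (i) there exist finitely many continuous maps a₀,…,a_N : X → M_n(ℂ) with each a_i(x) normal, v(x) a_i(x) v(x)* = ζ a_i(x), σ(a_i(x)) ⊆ ✲_k, and Σ_i a_i(x) a_i(x)* = 1 for every x ∈ X (i.e., dim(C(X, M_n(ℂ)), ℤ/k) < ∞ for the pointwise conjugation action); (ii) for every x ∈ X the eigenspaces ker(v(x) − ζ^j), j ∈ {0,…,k−1}, all have the same dimension (necessarily n/k). -/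

import Mathlib

/-- `ζ = exp(2πi/k)`. -/
noncomputable def ltZeta (k : ℕ) : ℂ := Complex.exp (2 * Real.pi * Complex.I / k)

/-- The "asterisk" set `✲_k = {t·ζ^m : t ∈ [0,1], 0 ≤ m < k} ⊆ ℂ`. -/
noncomputable def ltAsterisk (k : ℕ) : Set ℂ :=
  {z | ∃ t ∈ Set.Icc (0 : ℝ) 1, ∃ m : ℕ, m < k ∧ z = (t : ℂ) * ltZeta k ^ m}

section LtHelpers
open Matrix Finset
open scoped ComplexOrder

lemma ltZeta_prim (k : ℕ) (hk : 0 < k) : IsPrimitiveRoot (ltZeta k) k :=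
  Complex.isPrimitiveRoot_exp k hk.ne'

/-- spectral projection -/
noncomputable def ltQ {n : ℕ} (k : ℕ) (v : Matrix (Fin n) (Fin n) ℂ) (z : ℂ) :
    Matrix (Fin n) (Fin n) ℂ :=
  (k : ℂ)⁻¹ • ∑ m ∈ range k, (z⁻¹) ^ m • v ^ m

section
variable {n k : ℕ} {v : Matrix (Fin n) (Fin n) ℂ}

lemma lt_ne_zero (hk : 0 < k) {z : ℂ} (hz : z ^ k = 1) : z ≠ 0 := by
  rintro rfl
  rw [zero_pow hk.ne'] at hz
  exact zero_ne_one hz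

lemma lt_shift {M : Type*} [AddCommGroup M] (f : ℕ → M) (k : ℕ) (h : f k = f 0) :
    ∑ m ∈ range k, f (m + 1) = ∑ m ∈ range k, f m := by
  have h1 := Finset.sum_range_succ f k
  have h2 := Finset.sum_range_succ' f k
  rw [h1, h] at h2
  exact (add_right_cancel h2).symm

lemma ltQ_mul_left (hk : 0 < k) (hv : v ^ k = 1) {z : ℂ} (hz : z ^ k = 1) :
    v * ltQ k v z = z • ltQ k v z := by
  have hz0 := lt_ne_zero hk hz
  unfold ltQ
  rw [mul_smul_comm, smul_comm, Finset.mul_sum]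
  congr 1
  rw [← lt_shift (fun m => (z⁻¹) ^ m • v ^ m) k (by simp [hv, hz]), Finset.smul_sum]
  refine Finset.sum_congr rfl fun m _ => ?_
  rw [mul_smul_comm, ← pow_succ', smul_smul, pow_succ' z⁻¹, ← mul_assoc, mul_inv_cancel₀ hz0,
    one_mul]

lemma ltQ_comm (z : ℂ) : v * ltQ k v z = ltQ k v z * v := by
  unfold ltQ
  simp only [mul_smul_comm, smul_mul_assoc, Finset.mul_sum, Finset.sum_mul]
  simp only [← pow_succ', ← pow_succ]

lemma lt_pow_mul {m : Type*} {S : Matrix (Fin n) m ℂ} {z : ℂ} (h : v * S = z • S) (i : ℕ) :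
    v ^ i * S = z ^ i • S := by
  induction i with
  | zero => simp
  | succ i ih => rw [pow_succ, Matrix.mul_assoc, h, Matrix.mul_smul, ih, smul_smul, pow_succ']

lemma ltQ_fix (hk : 0 < k) {m : Type*} {S : Matrix (Fin n) m ℂ} {z : ℂ} (hz : z ^ k = 1)
    (h : v * S = z • S) : ltQ k v z * S = S := by
  have hz0 := lt_ne_zero hk hz
  unfold ltQ
  rw [Matrix.smul_mul, Matrix.sum_mul]
  have : ∀ i ∈ range k, ((z⁻¹) ^ i • v ^ i) * S = S := by
    intro i _
    rw [Matrix.smul_mul, lt_pow_mul h, smul_smul, ← mul_pow, inv_mul_cancel₀ hz0, one_pow, one_smul]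
  rw [Finset.sum_congr rfl this, Finset.sum_const, card_range, ← Nat.cast_smul_eq_nsmul ℂ,
    smul_smul, inv_mul_cancel₀ (by exact_mod_cast hk.ne'), one_smul]

lemma ltQ_kill (hk : 0 < k) (hv : v ^ k = 1) {m : Type*} {S : Matrix (Fin n) m ℂ} {z w : ℂ}
    (hz : z ^ k = 1) (h : v * S = w • S) (hzw : z ≠ w) : ltQ k v z * S = 0 := by
  have h1 : w • (ltQ k v z * S) = z • (ltQ k v z * S) := by
    rw [← Matrix.mul_smul, ← h, ← Matrix.mul_assoc, ← ltQ_comm, ltQ_mul_left hk hv hz,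
      Matrix.smul_mul]
  have h2 : (z - w) • (ltQ k v z * S) = 0 := by rw [sub_smul, h1, sub_self]
  exact (smul_eq_zero.1 h2).resolve_left (sub_ne_zero.2 hzw)

lemma ltQ_idem (hk : 0 < k) (hv : v ^ k = 1) {z : ℂ} (hz : z ^ k = 1) :
    ltQ k v z * ltQ k v z = ltQ k v z := ltQ_fix hk hz (ltQ_mul_left hk hv hz)

lemma lt_inv_star (hk : 0 < k) {z : ℂ} (hz : z ^ k = 1) : star z = z⁻¹ := by
  have h1 : ‖z‖ = 1 := Complex.norm_eq_one_of_pow_eq_one hz hk.ne'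
  exact (Complex.inv_eq_conj h1).symm

lemma ltQ_star (hk : 0 < k) (hv : v ^ k = 1) (hu : v ∈ unitary (Matrix (Fin n) (Fin n) ℂ))
    {z : ℂ} (hz : z ^ k = 1) : star (ltQ k v z) = ltQ k v z := by
  have hz0 := lt_ne_zero hk hz
  set Q := ltQ k v z with hQ
  have h1 : v * Q = z • Q := ltQ_mul_left hk hv hz
  have h3 : star v * Q = z⁻¹ • Q := by
    have : star v * (v * Q) = Q := by rw [← mul_assoc, (Unitary.mem_iff.1 hu).1, one_mul]
    rw [h1, mul_smul_comm] at this
    rw [← this, smul_smul, inv_mul_cancel₀ hz0, one_smul, this]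
  have h4 : star Q * v = z • star Q := by
    have := congrArg star h3
    rw [star_mul, star_star, star_smul, star_inv₀, lt_inv_star hk hz, inv_inv] at this
    exact this
  have h5 : ∀ i, star Q * v ^ i = z ^ i • star Q := by
    intro i
    induction i with
    | zero => simp
    | succ i ih => rw [pow_succ, ← mul_assoc, ih, smul_mul_assoc, h4, smul_smul, pow_succ]
  have h6 : star Q * Q = star Q := by
    conv_lhs => rw [hQ]
    conv_lhs => arg 2; unfold ltQ
    rw [← hQ, mul_smul_comm, Finset.mul_sum]
    have : ∀ i ∈ range k, star Q * ((z⁻¹) ^ i • v ^ i) = star Q := by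
      intro i _
      rw [mul_smul_comm, h5, smul_smul, ← mul_pow, inv_mul_cancel₀ hz0, one_pow, one_smul]
    rw [Finset.sum_congr rfl this, Finset.sum_const, card_range, ← Nat.cast_smul_eq_nsmul ℂ,
      smul_smul, inv_mul_cancel₀ (by exact_mod_cast hk.ne'), one_smul]
  have h7 := congrArg star h6
  rw [star_mul, star_star] at h7
  rw [← h6, h7]

lemma ltQ_sum (hk : 0 < k) (v : Matrix (Fin n) (Fin n) ℂ) :
    ∑ j ∈ range k, ltQ k v (ltZeta k ^ j) = 1 := by
  have hp := ltZeta_prim k hk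
  unfold ltQ
  rw [← Finset.smul_sum, Finset.sum_comm]
  simp only [← Finset.sum_smul]
  rw [Finset.sum_eq_single 0]
  · simp only [pow_zero, Finset.sum_const, card_range, nsmul_eq_mul, mul_one]
    rw [smul_smul, inv_mul_cancel₀ (by exact_mod_cast hk.ne'), one_smul]
  · intro m hm hm0
    have hmk := Finset.mem_range.1 hm
    have h1 : ∑ j ∈ range k, ((ltZeta k ^ j)⁻¹) ^ m = 0 := by
      have h2 : ∀ j, ((ltZeta k ^ j)⁻¹) ^ m = ((ltZeta k ^ m)⁻¹) ^ j := by
        intro j; rw [inv_pow, inv_pow, ← pow_mul, ← pow_mul, mul_comm]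
      simp only [h2]
      have h3 : (ltZeta k ^ m)⁻¹ ≠ 1 := by
        intro h
        exact hp.pow_ne_one_of_pos_of_lt hm0 hmk (inv_eq_one.1 h)
      have h4 : ((ltZeta k ^ m)⁻¹) ^ k = 1 := by
        rw [inv_pow, ← pow_mul, mul_comm, pow_mul, hp.pow_eq_one, one_pow, inv_one]
      have := geom_sum_eq h3 k
      rw [this, h4, sub_self, zero_div]
    rw [h1, zero_smul]
  · intro h; exact absurd (Finset.mem_range.2 hk) h

lemma ltQ_trace (hk : 0 < k) (hv : v ^ k = 1) {z : ℂ} (hz : z ^ k = 1) :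
    (ltQ k v z).trace = (Module.finrank ℂ
      ↥(Module.End.eigenspace (Matrix.toLin' v) z) : ℂ) := by
  have hproj : LinearMap.IsProj (Module.End.eigenspace (Matrix.toLin' v) z)
      (Matrix.toLin' (ltQ k v z)) := by
    constructor
    · intro x
      rw [Module.End.mem_eigenspace_iff, Matrix.toLin'_apply, Matrix.toLin'_apply,
        Matrix.mulVec_mulVec, ltQ_mul_left hk hv hz, Matrix.smul_mulVec]
    · intro x hx
      rw [Module.End.mem_eigenspace_iff, Matrix.toLin'_apply] at hx
      rw [Matrix.toLin'_apply]
      have h1 : v * Matrix.replicateCol Unit x = z • Matrix.replicateCol Unit x := by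
        rw [← Matrix.replicateCol_mulVec, hx, Matrix.replicateCol_smul]
      have h2 := ltQ_fix hk hz h1
      rw [← Matrix.replicateCol_mulVec] at h2
      exact Matrix.replicateCol_injective h2
  rw [← hproj.trace, Matrix.trace_toLin'_eq]

lemma ltQ_intertwine {a : Matrix (Fin n) (Fin n) ℂ} {c z : ℂ} (hc : c ≠ 0)
    (h : v * a = c • (a * v)) : ltQ k v (c * z) * a = a * ltQ k v z := by
  have h1 : ∀ m, v ^ m * a = c ^ m • (a * v ^ m) := by
    intro m
    induction m with
    | zero => simp
    | succ m ih =>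
      rw [pow_succ, mul_assoc, h, mul_smul_comm, ← mul_assoc, ih, smul_mul_assoc, smul_smul,
        mul_assoc, ← pow_succ']
  unfold ltQ
  rw [smul_mul_assoc, mul_smul_comm, Finset.sum_mul, Finset.mul_sum]
  congr 1
  refine Finset.sum_congr rfl fun m _ => ?_
  rw [smul_mul_assoc, mul_smul_comm, h1, smul_smul, mul_inv, mul_pow, mul_right_comm, ← mul_pow,
    inv_mul_cancel₀ hc, one_pow, one_mul]

/-- (i) → (ii), pointwise -/
lemma lt_forward (hk : 0 < k) (hv : v ^ k = 1) (hu : v ∈ unitary (Matrix (Fin n) (Fin n) ℂ))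
    {N : ℕ} (a : Fin (N + 1) → Matrix (Fin n) (Fin n) ℂ) (hn : ∀ i, IsStarNormal (a i))
    (hc : ∀ i, v * a i * star v = ltZeta k • a i) (hs : ∑ i, a i * star (a i) = 1) (j : ℕ) :
    Module.finrank ℂ ↥(Module.End.eigenspace (Matrix.toLin' v) (ltZeta k ^ j)) =
    Module.finrank ℂ ↥(Module.End.eigenspace (Matrix.toLin' v) 1) := by
  have hp := ltZeta_prim k hk
  have hr : ∀ j : ℕ, (ltZeta k ^ j) ^ k = 1 := fun j => by
    rw [← pow_mul, mul_comm, pow_mul, hp.pow_eq_one, one_pow]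
  have hcomm : ∀ i, v * a i = ltZeta k • (a i * v) := by
    intro i
    have : v * a i * star v * v = v * a i := by
      rw [mul_assoc, (Unitary.mem_iff.1 hu).1, mul_one]
    rw [← this, hc, smul_mul_assoc]
  have key : ∀ z : ℂ, (ltQ k v (ltZeta k * z)).trace = (ltQ k v z).trace := by
    intro z
    have e1 : ltQ k v (ltZeta k * z) = ∑ i, ltQ k v (ltZeta k * z) * (a i * star (a i)) := by
      rw [← Finset.mul_sum, hs, mul_one]
    have e2 : ltQ k v z = ∑ i, ltQ k v z * (a i * star (a i)) := by
      rw [← Finset.mul_sum, hs, mul_one]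
    rw [e1]
    conv_rhs => rw [e2]
    rw [Matrix.trace_sum, Matrix.trace_sum]
    refine Finset.sum_congr rfl fun i _ => ?_
    rw [← mul_assoc, ltQ_intertwine (hp.ne_zero hk.ne') (hcomm i), mul_assoc, Matrix.trace_mul_comm,
      mul_assoc, (hn i).star_comm_self.eq]
  have key2 : (ltQ k v (ltZeta k ^ j)).trace = (ltQ k v 1).trace := by
    induction j with
    | zero => rw [pow_zero]
    | succ j ih => rw [pow_succ', key, ih]
  rw [ltQ_trace hk hv (hr j), ltQ_trace hk hv (one_pow k)] at key2
  exact_mod_cast key2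

lemma lt_frame (hk : 0 < k) (hv : v ^ k = 1) (hu : v ∈ unitary (Matrix (Fin n) (Fin n) ℂ))
    {d : ℕ} {z : ℂ} (hz : z ^ k = 1)
    (hd : Module.finrank ℂ ↥(Module.End.eigenspace (Matrix.toLin' v) z) = d) :
    ∃ S : Matrix (Fin n) (Fin d) ℂ, Sᴴ * S = 1 ∧ v * S = z • S ∧ S * Sᴴ = ltQ k v z := by
  let E : Submodule ℂ (EuclideanSpace ℂ (Fin n)) :=
    (Module.End.eigenspace (Matrix.toLin' v) z).comap (WithLp.linearEquiv 2 ℂ (Fin n → ℂ)).toLinearMap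
  have hE : Module.finrank ℂ E = d := by
    rw [← hd]
    exact LinearEquiv.finrank_eq
      (LinearEquiv.ofSubmodule' (WithLp.linearEquiv 2 ℂ (Fin n → ℂ)) _)
  let b : OrthonormalBasis (Fin d) ℂ E := (stdOrthonormalBasis ℂ E).reindex (finCongr hE)
  let S : Matrix (Fin n) (Fin d) ℂ := Matrix.of fun i l => (b l : EuclideanSpace ℂ (Fin n)) i
  have h1 : Sᴴ * S = 1 := by
    ext l l'
    have := orthonormal_iff_ite.1 b.orthonormal l l'
    rw [Submodule.coe_inner, EuclideanSpace.inner_eq_star_dotProduct] at this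
    rw [Matrix.one_apply, ← this, Matrix.mul_apply, dotProduct]
    refine Finset.sum_congr rfl fun i _ => ?_
    simp [S, mul_comm]
  have h2 : v * S = z • S := by
    ext i l
    have := (b l).2
    simp only [E, Submodule.mem_comap, Module.End.mem_eigenspace_iff, Matrix.toLin'_apply] at this
    have := congrFun this i
    simpa [S, Matrix.mul_apply, Matrix.mulVec, dotProduct] using this
  refine ⟨S, h1, h2, ?_⟩
  have hQ := ltQ_star hk hv hu hz
  rw [Matrix.star_eq_conjTranspose] at hQ
  have h3 : ltQ k v z * S = S := ltQ_fix hk hz h2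
  have h4 : Sᴴ * ltQ k v z = Sᴴ := by
    have := congrArg Matrix.conjTranspose h3
    rwa [Matrix.conjTranspose_mul, hQ] at this
  have h5 : (ltQ k v z - S * Sᴴ)ᴴ * (ltQ k v z - S * Sᴴ) = ltQ k v z - S * Sᴴ := by
    rw [Matrix.conjTranspose_sub, Matrix.conjTranspose_mul, Matrix.conjTranspose_conjTranspose, hQ,
      Matrix.sub_mul, Matrix.mul_sub, Matrix.mul_sub, ltQ_idem hk hv hz, ← Matrix.mul_assoc, h3,
      Matrix.mul_assoc, h4, Matrix.mul_assoc, ← Matrix.mul_assoc Sᴴ, h1, Matrix.one_mul, sub_self,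
      sub_zero]
  have h6 : ((ltQ k v z - S * Sᴴ)ᴴ * (ltQ k v z - S * Sᴴ)).trace = 0 := by
    rw [h5, Matrix.trace_sub, ltQ_trace hk hv hz, Matrix.trace_mul_comm, h1, hd]
    simp
  exact (sub_eq_zero.1 (Matrix.trace_conjTranspose_mul_self_eq_zero_iff.1 h6)).symm

lemma lt_shift_unitary (hk : 0 < k) (hv : v ^ k = 1)
    (hu : v ∈ unitary (Matrix (Fin n) (Fin n) ℂ))
    (hdim : ∀ j j' : Fin k,
        Module.finrank ℂ
          ↥(Module.End.eigenspace (Matrix.toLin' v) (ltZeta k ^ (j : ℕ))) =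
        Module.finrank ℂ
          ↥(Module.End.eigenspace (Matrix.toLin' v) (ltZeta k ^ (j' : ℕ)))) :
    ∃ u : Matrix (Fin n) (Fin n) ℂ, u ∈ unitary (Matrix (Fin n) (Fin n) ℂ) ∧ u ^ k = 1 ∧
      v * u = ltZeta k • (u * v) := by
  have hp := ltZeta_prim k hk
  have hr : ∀ j : ℕ, (ltZeta k ^ j) ^ k = 1 := fun j => by
    rw [← pow_mul, mul_comm, pow_mul, hp.pow_eq_one, one_pow]
  set d := Module.finrank ℂ ↥(Module.End.eigenspace (Matrix.toLin' v) 1) with hd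
  have hdz : ∀ z : ℂ, z ^ k = 1 →
      Module.finrank ℂ ↥(Module.End.eigenspace (Matrix.toLin' v) z) = d := by
    intro z hz
    have : NeZero k := ⟨hk.ne'⟩
    obtain ⟨i, hi, rfl⟩ := hp.eq_pow_of_pow_eq_one hz
    have := hdim ⟨i, hi⟩ ⟨0, hk⟩
    have e : ltZeta k ^ ((⟨0, hk⟩ : Fin k) : ℕ) = 1 := pow_zero _
    rw [e] at this
    exact this
  have hex : ∀ z : ℂ, ∃ S : Matrix (Fin n) (Fin d) ℂ, z ^ k = 1 →
      Sᴴ * S = 1 ∧ v * S = z • S ∧ S * Sᴴ = ltQ k v z := by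
    intro z
    by_cases hz : z ^ k = 1
    · obtain ⟨S, hS⟩ := lt_frame hk hv hu hz (hdz z hz)
      exact ⟨S, fun _ => hS⟩
    · exact ⟨0, fun h => absurd h hz⟩
  choose S hS using hex
  set F : ℕ → Matrix (Fin n) (Fin d) ℂ := fun j => S (ltZeta k ^ j) with hF
  have hF1 : ∀ j, (F j)ᴴ * F j = 1 := fun j => (hS _ (hr j)).1
  have hF2 : ∀ j, v * F j = ltZeta k ^ j • F j := fun j => (hS _ (hr j)).2.1
  have hF3 : ∀ j, F j * (F j)ᴴ = ltQ k v (ltZeta k ^ j) := fun j => (hS _ (hr j)).2.2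
  have hFk : ∀ j, F (j + k) = F j := fun j => by
    simp only [hF, pow_add, hp.pow_eq_one, mul_one]
  have hF0 : ∀ i j, ltZeta k ^ i ≠ ltZeta k ^ j → (F i)ᴴ * F j = 0 := by
    intro i j hij
    have h1 : (F i)ᴴ = (F i)ᴴ * ltQ k v (ltZeta k ^ i) := by
      rw [← hF3, ← Matrix.mul_assoc, hF1, Matrix.one_mul]
    rw [h1, Matrix.mul_assoc, ltQ_kill hk hv (hr i) (hF2 j) hij, Matrix.mul_zero]
  have hsum : ∑ j ∈ range k, F j * (F j)ᴴ = 1 := by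
    simp only [hF3]
    exact ltQ_sum hk v
  have hext : ∀ A B : Matrix (Fin n) (Fin n) ℂ, (∀ j, A * F j = B * F j) → A = B := by
    intro A B h
    rw [← mul_one A, ← mul_one B, ← hsum, Finset.mul_sum, Finset.mul_sum]
    refine Finset.sum_congr rfl fun j _ => ?_
    rw [← Matrix.mul_assoc, ← Matrix.mul_assoc, h]
  set u : Matrix (Fin n) (Fin n) ℂ := ∑ j ∈ range k, F (j + 1) * (F j)ᴴ with hudef
  have huF' : ∀ j, j < k → u * F j = F (j + 1) := by
    intro j hj
    rw [hudef, Matrix.sum_mul, Finset.sum_eq_single j]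
    · rw [Matrix.mul_assoc, hF1, Matrix.mul_one]
    · intro i hi hij
      rw [Matrix.mul_assoc, hF0, Matrix.mul_zero]
      intro h
      exact hij (hp.pow_inj (Finset.mem_range.1 hi) hj h)
    · intro h; exact absurd (Finset.mem_range.2 hj) h
  have huF : ∀ j, u * F j = F (j + 1) := by
    intro j
    have e : ltZeta k ^ j = ltZeta k ^ (j % k) := by
      conv_lhs => rw [← Nat.div_add_mod j k, pow_add, pow_mul, hp.pow_eq_one, one_pow, one_mul]
    have e1 : F j = F (j % k) := by simp only [hF, e]
    have e2 : F (j + 1) = F (j % k + 1) := by simp only [hF, pow_succ, e]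
    rw [e1, e2, huF' _ (Nat.mod_lt _ hk)]
  have huu : u * star u = 1 := by
    have : star u = ∑ j ∈ range k, F j * (F (j + 1))ᴴ := by
      rw [hudef, Matrix.star_eq_conjTranspose, Matrix.conjTranspose_sum]
      simp [Matrix.conjTranspose_mul]
    rw [this, Finset.mul_sum, ← hsum, ← lt_shift (fun j => F j * (F j)ᴴ) k]
    · refine Finset.sum_congr rfl fun j _ => ?_
      rw [← Matrix.mul_assoc, huF]
    · have := hFk 0
      rw [zero_add] at this
      simp only [this]
  refine ⟨u, Unitary.mem_iff.2 ⟨mul_eq_one_comm.1 huu, huu⟩, ?_, ?_⟩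
  · have hpow : ∀ m j, u ^ m * F j = F (j + m) := by
      intro m
      induction m with
      | zero => intro j; simp
      | succ m ih =>
        intro j
        rw [pow_succ, Matrix.mul_assoc, huF, ih, add_assoc, add_comm 1 m]
    apply hext
    intro j
    rw [hpow, hFk, Matrix.one_mul]
  · apply hext
    intro j
    rw [Matrix.mul_assoc, huF, hF2, Matrix.smul_mul, Matrix.mul_assoc, hF2, Matrix.mul_smul, huF,
      smul_smul, pow_succ']
end

section
open scoped Matrix.Norms.L2Operator

lemma lt_polar {X : Type*} [TopologicalSpace X] {n : ℕ} (x₀ : X)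
    (Z : X → Matrix (Fin n) (Fin n) ℂ) (hZ : Continuous Z) (hZ0 : Z x₀ = 1) :
    ∃ U : Set X, IsOpen U ∧ x₀ ∈ U ∧ ∃ R : X → Matrix (Fin n) (Fin n) ℂ, ContinuousOn R U ∧
      (∀ x, star (R x) = R x) ∧
      (∀ x ∈ U, R x * (star (Z x) * Z x) * R x = 1) ∧
      (∀ x (b : Matrix (Fin n) (Fin n) ℂ), Commute (star (Z x) * Z x) b → Commute (R x) b) := by
  set H : X → Matrix (Fin n) (Fin n) ℂ := fun x => star (Z x) * Z x with hH
  have hHc : Continuous H := hZ.star.mul hZ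
  have hHs : ∀ x, IsSelfAdjoint (H x) := fun x => IsSelfAdjoint.star_mul_self (Z x)
  have hH0 : H x₀ = 1 := by simp [hH, hZ0]
  let f : ℝ → ℝ := fun t => (Real.sqrt t)⁻¹
  let s : Set ℝ := Metric.closedBall 1 (1/2)
  have hs : IsCompact s := isCompact_closedBall _ _
  have hpos : ∀ t ∈ s, 0 < t := by
    intro t ht
    have := abs_le.1 (by simpa [s, Real.dist_eq] using ht : |t - 1| ≤ 2⁻¹)
    linarith [this.1]
  have hf : ContinuousOn f s := by
    refine Real.continuous_sqrt.continuousOn.inv₀ fun t ht => ?_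
    exact (Real.sqrt_pos.2 (hpos t ht)).ne'
  have hspec : ∀ x, ‖H x - 1‖ * ‖(1 : Matrix (Fin n) (Fin n) ℂ)‖ < 1/2 →
      spectrum ℝ (H x) ⊆ s := by
    intro x hx t ht
    have h1 : t - 1 ∈ spectrum ℝ (H x - algebraMap ℝ _ 1) := by
      rw [← spectrum.sub_singleton_eq]
      exact Set.sub_mem_sub ht rfl
    have h2 := spectrum.subset_closedBall_norm_mul _ h1
    rw [map_one, mem_closedBall_zero_iff] at h2
    simp only [s, Metric.mem_closedBall, dist_eq_norm]
    exact h2.trans hx.le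
  refine ⟨{x | ‖H x - 1‖ * ‖(1 : Matrix (Fin n) (Fin n) ℂ)‖ < 1/2}, ?_, ?_, fun x => cfc f (H x), ?_, ?_, ?_, ?_⟩
  · exact isOpen_lt (by fun_prop) continuous_const
  · simp [hH0]
  · refine ContinuousOn.cfc' hs f hHc.continuousOn (fun x hx => hspec x hx) (fun x _ => hHs x) hf
  · intro x
    exact (cfc_predicate f (H x) : IsSelfAdjoint _).star_eq
  · intro x hx
    have hsp : spectrum ℝ (H x) ⊆ s := hspec x hx
    have hfx : ContinuousOn f (spectrum ℝ (H x)) := hf.mono hsp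
    have hid : cfc (fun t : ℝ => t) (H x) = H x := cfc_id' ℝ (H x)
    change cfc f (H x) * H x * cfc f (H x) = 1
    conv_lhs => arg 1; arg 2; rw [← hid]
    rw [← cfc_mul .., ← cfc_mul .., ← cfc_one ℝ (H x)]
    refine cfc_congr fun t ht => ?_
    have h1 := hpos t (hsp ht)
    have h2 := Real.sqrt_pos.2 h1
    simp only [f, Pi.one_apply]
    field_simp
    rw [Real.sq_sqrt h1.le]
  · intro x b hb
    exact hb.cfc_real f
end

lemma lt_local {X : Type*} [TopologicalSpace X] {n k : ℕ} (hk : 0 < k)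
    (v : X → Matrix (Fin n) (Fin n) ℂ) (hvcont : Continuous v)
    (hvu : ∀ x, v x ∈ unitary (Matrix (Fin n) (Fin n) ℂ))
    (hvk : ∀ x, v x ^ k = 1) (x₀ : X)
    (hdim : ∀ j j' : Fin k,
        Module.finrank ℂ
          ↥(Module.End.eigenspace (Matrix.toLin' (v x₀)) (ltZeta k ^ (j : ℕ))) =
        Module.finrank ℂ
          ↥(Module.End.eigenspace (Matrix.toLin' (v x₀)) (ltZeta k ^ (j' : ℕ)))) :
    ∃ U : Set X, IsOpen U ∧ x₀ ∈ U ∧ ∃ u : X → Matrix (Fin n) (Fin n) ℂ, ContinuousOn u U ∧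
      ∀ x ∈ U, u x ∈ unitary (Matrix (Fin n) (Fin n) ℂ) ∧ u x ^ k = 1 ∧
        v x * u x * star (v x) = ltZeta k • u x := by
  obtain ⟨u₀, hu0, hu0k, hu0c⟩ := lt_shift_unitary hk (hvk x₀) (hvu x₀) hdim
  set w := v x₀ with hw
  have hw1 : star w * w = 1 := (Unitary.mem_iff.1 (hvu x₀)).1
  have hw2 : w * star w = 1 := (Unitary.mem_iff.1 (hvu x₀)).2
  have hv1 : ∀ x, star (v x) * v x = 1 := fun x => (Unitary.mem_iff.1 (hvu x)).1
  have hv2 : ∀ x, v x * star (v x) = 1 := fun x => (Unitary.mem_iff.1 (hvu x)).2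
  have hk0 : (k : ℂ) ≠ 0 := by exact_mod_cast hk.ne'
  let Z : X → Matrix (Fin n) (Fin n) ℂ :=
    fun x => (k : ℂ)⁻¹ • ∑ m ∈ range k, v x ^ m * star w ^ m
  have hZc : Continuous Z := by
    have : Continuous fun x => ∑ m ∈ range k, v x ^ m * star w ^ m :=
      continuous_finsetSum _ fun m _ => (hvcont.pow m).mul continuous_const
    exact this.const_smul ((k : ℂ)⁻¹)
  have hZ0 : Z x₀ = 1 := by
    have : ∀ m ∈ range k, v x₀ ^ m * star w ^ m = 1 := by
      intro m _
      rw [← hw, ← (show Commute w (star w) from hw2.trans hw1.symm).mul_pow, hw2, one_pow]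
    simp only [Z]
    rw [Finset.sum_congr rfl this, Finset.sum_const, card_range, ← Nat.cast_smul_eq_nsmul ℂ,
      smul_smul, inv_mul_cancel₀ hk0, one_smul]
  have hZv : ∀ x, v x * Z x = Z x * w := by
    intro x
    simp only [Z]
    rw [mul_smul_comm, smul_mul_assoc]
    congr 1
    conv_rhs => rw [← lt_shift (fun m => v x ^ m * star w ^ m) k
      (by simp [hvk x, ← star_pow, hw, hvk x₀])]
    rw [Finset.mul_sum, Finset.sum_mul]
    refine Finset.sum_congr rfl fun m _ => ?_
    rw [pow_succ (star w), mul_assoc (v x ^ (m + 1)), mul_assoc _ (star w), hw1, mul_one, pow_succ',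
      mul_assoc]
  obtain ⟨U, hUo, hxU, R, hRc, hRs, hR1, hRcomm⟩ := lt_polar x₀ Z hZc hZ0
  have hcom : ∀ x, Commute (star (Z x) * Z x) w := by
    intro x
    have h1 : star (Z x) * v x = w * star (Z x) := by
      have h2 := congrArg star (hZv x)
      rw [star_mul, star_mul] at h2
      calc star (Z x) * v x = w * (star w * star (Z x)) * v x := by
            rw [← mul_assoc w, hw2, one_mul]
        _ = w * (star (Z x) * (star (v x) * v x)) := by rw [← h2]; simp only [mul_assoc]
        _ = w * star (Z x) := by rw [hv1, mul_one]
    change star (Z x) * Z x * w = w * (star (Z x) * Z x)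
    rw [mul_assoc, ← hZv, ← mul_assoc, h1, mul_assoc]
  have hRw : ∀ x, R x * w = w * R x := fun x => hRcomm x w (hcom x)
  let W : X → Matrix (Fin n) (Fin n) ℂ := fun x => Z x * R x
  have hWc : ContinuousOn W U := hZc.continuousOn.mul hRc
  have hW1 : ∀ x ∈ U, star (W x) * W x = 1 := by
    intro x hx
    rw [← hR1 x hx]
    simp only [W, star_mul, hRs, mul_assoc]
  have hW2 : ∀ x ∈ U, W x * star (W x) = 1 := fun x hx => mul_eq_one_comm.1 (hW1 x hx)
  have hWv : ∀ x, v x * W x = W x * w := by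
    intro x
    simp only [W]
    rw [← mul_assoc, hZv, mul_assoc, mul_assoc, hRw]
  refine ⟨U, hUo, hxU, fun x => W x * u₀ * star (W x), ?_, ?_⟩
  · exact (hWc.mul continuousOn_const).mul (continuous_star.comp_continuousOn hWc)
  · intro x hx
    refine ⟨?_, ?_, ?_⟩
    · have hWu : W x ∈ unitary (Matrix (Fin n) (Fin n) ℂ) :=
        Unitary.mem_iff.2 ⟨hW1 x hx, hW2 x hx⟩
      exact mul_mem (mul_mem hWu hu0) (Unitary.star_mem hWu)
    · have : ∀ m, (W x * u₀ * star (W x)) ^ m = W x * u₀ ^ m * star (W x) := by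
        intro m
        induction m with
        | zero => simp [hW2 x hx]
        | succ m ih =>
          rw [pow_succ, ih]
          calc W x * u₀ ^ m * star (W x) * (W x * u₀ * star (W x))
              = W x * u₀ ^ m * (star (W x) * W x) * u₀ * star (W x) := by simp only [mul_assoc]
            _ = _ := by rw [hW1 x hx, mul_one, pow_succ, mul_assoc (W x)]
      rw [this, hu0k, mul_one, hW2 x hx]
    · have h1 : star (W x) * star (v x) = star w * star (W x) := by
        rw [← star_mul, hWv, star_mul]
      calc v x * (W x * u₀ * star (W x)) * star (v x)
          = (v x * W x) * u₀ * (star (W x) * star (v x)) := by simp only [mul_assoc]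
        _ = W x * (w * u₀) * star w * star (W x) := by rw [h1, hWv]; simp only [mul_assoc]
        _ = _ := by
          rw [hu0c, mul_smul_comm, smul_mul_assoc, smul_mul_assoc]
          congr 1
          rw [mul_assoc (W x), mul_assoc u₀, hw2, mul_one]

lemma lt_spec {n k : ℕ} (hk : 0 < k) {u : Matrix (Fin n) (Fin n) ℂ} (hu : u ^ k = 1) {c : ℝ}
    (hc : c ∈ Set.Icc (0 : ℝ) 1) : spectrum ℂ ((c : ℂ) • u) ⊆ ltAsterisk k := by
  rcases subsingleton_or_nontrivial (Matrix (Fin n) (Fin n) ℂ) with hs | hs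
  · rw [spectrum.of_subsingleton]; exact Set.empty_subset _
  intro z hz
  have hne : (spectrum ℂ u).Nonempty := by
    have : Nonempty (Fin n) := by
      by_contra h
      have := not_nonempty_iff.1 h
      exact (not_subsingleton (Matrix (Fin n) (Fin n) ℂ)) inferInstance
    exact spectrum.nonempty_of_isAlgClosed_of_finiteDimensional ℂ u
  rw [spectrum.smul_eq_smul _ _ hne] at hz
  obtain ⟨y, hy, rfl⟩ := hz
  have h1 : y ^ k ∈ spectrum ℂ (u ^ k) := spectrum.pow_mem_pow u k hy
  rw [hu, spectrum.one_eq] at h1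
  have : NeZero k := ⟨hk.ne'⟩
  obtain ⟨m, hm, rfl⟩ := (ltZeta_prim k hk).eq_pow_of_pow_eq_one h1
  exact ⟨c, hc, m, hm, rfl⟩

lemma lt_backward {X : Type*} [TopologicalSpace X] [CompactSpace X] [T2Space X]
    (n k : ℕ) (hk : 0 < k)
    (v : X → Matrix (Fin n) (Fin n) ℂ) (hvcont : Continuous v)
    (hvu : ∀ x, v x ∈ unitary (Matrix (Fin n) (Fin n) ℂ))
    (hvk : ∀ x, v x ^ k = 1)
    (hdim : ∀ x, ∀ j j' : Fin k,
        Module.finrank ℂ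
          ↥(Module.End.eigenspace (Matrix.toLin' (v x)) (ltZeta k ^ (j : ℕ))) =
        Module.finrank ℂ
          ↥(Module.End.eigenspace (Matrix.toLin' (v x)) (ltZeta k ^ (j' : ℕ)))) :
    ∃ N : ℕ, ∃ a : Fin (N + 1) → X → Matrix (Fin n) (Fin n) ℂ,
        (∀ i, Continuous (a i)) ∧
        (∀ i x, IsStarNormal (a i x)) ∧
        (∀ i x, v x * a i x * star (v x) = ltZeta k • a i x) ∧
        (∀ i x, spectrum ℂ (a i x) ⊆ ltAsterisk k) ∧
        (∀ x, (∑ i, a i x * star (a i x)) = 1) := by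
  rcases isEmpty_or_nonempty X with hX | ⟨⟨p⟩⟩
  · exact ⟨0, fun _ _ => 0, fun _ => continuous_const, fun _ x => hX.elim x, fun _ x => hX.elim x,
      fun _ x => hX.elim x, fun x => hX.elim x⟩
  choose U hUo hxU u huc hu using fun x => lt_local hk v hvcont hvu hvk x (hdim x)
  obtain ⟨t, ht⟩ := isCompact_univ.elim_finite_subcover U hUo
    (fun x _ => Set.mem_iUnion.2 ⟨x, hxU x⟩)
  have htne : t.card ≠ 0 := by
    intro h
    rw [Finset.card_eq_zero] at h
    have := ht (Set.mem_univ p)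
    simp [h] at this
  obtain ⟨N, hN⟩ := Nat.exists_eq_succ_of_ne_zero htne
  let e : Fin (N + 1) ≃ t := (t.equivFinOfCardEq hN).symm
  let y : Fin (N + 1) → X := fun i => e i
  obtain ⟨f, hfs, hf1, hf01, -⟩ := exists_continuous_sum_one_of_isOpen_isCompact
    (s := fun i => U (y i)) (fun i => hUo _) isCompact_univ (by
      intro x hx
      obtain ⟨z, hz, hxz⟩ := Set.mem_iUnion₂.1 (ht hx)
      refine Set.mem_iUnion.2 ⟨e.symm ⟨z, hz⟩, ?_⟩
      simpa [y] using hxz)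
  have hzero : ∀ i x, x ∉ U (y i) → f i x = 0 := by
    intro i x hx
    exact image_eq_zero_of_notMem_tsupport fun h => hx (hfs i h)
  have hsq : ∀ i x, Real.sqrt (f i x) ∈ Set.Icc (0 : ℝ) 1 := fun i x =>
    ⟨Real.sqrt_nonneg _, Real.sqrt_le_one.2 (hf01 i x).2⟩
  refine ⟨N, fun i x => ((Real.sqrt (f i x) : ℝ) : ℂ) • u (y i) x, ?_, ?_, ?_, ?_, ?_⟩
  · intro i
    refine ContinuousOn.continuous_of_tsupport_subset (s := U (y i)) ?_ (hUo _) ?_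
    · have : Continuous fun x => ((Real.sqrt (f i x) : ℝ) : ℂ) :=
        Complex.continuous_ofReal.comp (Real.continuous_sqrt.comp (f i).continuous)
      exact this.continuousOn.smul (huc _)
    · refine (closure_mono ?_).trans (hfs i)
      intro x hx h0
      apply hx
      simp [h0]
  · intro i x
    by_cases hx : x ∈ U (y i)
    · have h := Unitary.mem_iff.1 (hu _ x hx).1
      refine ⟨?_⟩
      rw [star_smul]
      change _ * _ = _ * _
      rw [smul_mul_smul_comm, smul_mul_smul_comm, h.1, h.2, mul_comm]
    · simp only [hzero i x hx, Real.sqrt_zero, Complex.ofReal_zero, zero_smul]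
      infer_instance
  · intro i x
    by_cases hx : x ∈ U (y i)
    · rw [mul_smul_comm, smul_mul_assoc, (hu _ x hx).2.2, smul_comm]
    · simp [hzero i x hx]
  · intro i x
    by_cases hx : x ∈ U (y i)
    · exact lt_spec hk (hu _ x hx).2.1 (hsq i x)
    · have : ((Real.sqrt (f i x) : ℝ) : ℂ) • u (y i) x
          = ((Real.sqrt (f i x) : ℝ) : ℂ) • (1 : Matrix (Fin n) (Fin n) ℂ) := by
        simp [hzero i x hx]
      beta_reduce
      rw [this]
      exact lt_spec hk (one_pow k) (hsq i x)
  · intro x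
    have h1 : ∀ i, ((Real.sqrt (f i x) : ℝ) : ℂ) • u (y i) x *
        star (((Real.sqrt (f i x) : ℝ) : ℂ) • u (y i) x) =
        ((f i x : ℝ) : ℂ) • (1 : Matrix (Fin n) (Fin n) ℂ) := by
      intro i
      by_cases hx : x ∈ U (y i)
      · rw [star_smul, smul_mul_smul_comm, (Unitary.mem_iff.1 (hu _ x hx).1).2]
        congr 1
        rw [Complex.star_def, Complex.conj_ofReal, ← Complex.ofReal_mul,
          Real.mul_self_sqrt (hf01 i x).1]
      · simp [hzero i x hx]
    rw [Finset.sum_congr rfl fun i _ => h1 i, ← Finset.sum_smul, ← Complex.ofReal_sum]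
    have h2 := hf1 (Set.mem_univ x)
    simp only [Finset.sum_apply, Pi.one_apply] at h2
    rw [h2, Complex.ofReal_one, one_smul]

end LtHelpers

/-- For a continuous family of unitaries `v : X → M_n(ℂ)` with
`v(x)^k = 1` over a compact Hausdorff space, the (plain) local-triviality dimension of
the pointwise conjugation `ℤ/k`-action on `C(X, M_n(ℂ))` is finite — i.e. there is a
finite admissible family of continuous maps with pointwise `Σ aᵢ aᵢ* = 1` — if and only
if, at every `x`, all the eigenspaces `ker(v(x) - ζ^j)` have the same dimension. -/
theorem stmt5
    {X : Type*} [TopologicalSpace X] [CompactSpace X] [T2Space X]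
    (n k : ℕ) (hk : 0 < k)
    (v : X → Matrix (Fin n) (Fin n) ℂ) (hvcont : Continuous v)
    (hvu : ∀ x, v x ∈ unitary (Matrix (Fin n) (Fin n) ℂ))
    (hvk : ∀ x, v x ^ k = 1) :
    (∃ N : ℕ, ∃ a : Fin (N + 1) → X → Matrix (Fin n) (Fin n) ℂ,
        (∀ i, Continuous (a i)) ∧
        (∀ i x, IsStarNormal (a i x)) ∧
        (∀ i x, v x * a i x * star (v x) = ltZeta k • a i x) ∧
        (∀ i x, spectrum ℂ (a i x) ⊆ ltAsterisk k) ∧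
        (∀ x, (∑ i, a i x * star (a i x)) = 1)) ↔
    (∀ x, ∀ j j' : Fin k,
        Module.finrank ℂ
          ↥(Module.End.eigenspace (Matrix.toLin' (v x)) (ltZeta k ^ (j : ℕ))) =
        Module.finrank ℂ
          ↥(Module.End.eigenspace (Matrix.toLin' (v x)) (ltZeta k ^ (j' : ℕ)))) := by
  constructor
  · rintro ⟨N, a, -, hn, hc, -, hs⟩ x j j'
    rw [lt_forward hk (hvk x) (hvu x) (fun i => a i x) (fun i => hn i x) (fun i => hc i x) (hs x),
      lt_forward hk (hvk x) (hvu x) (fun i => a i x) (fun i => hn i x) (fun i => hc i x) (hs x)]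
  · exact lt_backward n k hk v hvcont hvu hvk
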